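/- For all nonnegative integers t and all n ≥ 0, the number of overpartition t-tuples satisfies p̄_t(16n+10) ≡ 0 (mod 8). -/

import Mathlib

/-- The number of overpartitions of `n`: a partition of `n` together with a
choice of which distinct part values are overlined (the first occurrence of a
part value may be overlined), so that the count is `∑_{λ ⊢ n} 2^{#distinct parts of λ}`. -/
def overpartitionCount (n : ℕ) : ℕ :=
  ∑ p : n.Partition, 2 ^ p.parts.toFinset.card

/-- The number of overpartition `t`-tuples of `n`: `t`-tuples of overpartitions
whose sizes sum to `n`. -/
def overpartitionTuples (t n : ℕ) : ℕ :=
  ∑ c ∈ Finset.Nat.antidiagonalTuple t n, ∏ i, overpartitionCount (c i)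

/-!
By Gauss's identity, the generating function `P = ∏ (1 + q ^ m) / (1 - q ^ m)` of overpartitions is
the inverse of `∑ (-1) ^ j q ^ (j ^ 2)`, the sum being over all integers `j`. The latter series is
`1 + 2 T`, where `T` is supported on the positive squares, so
`P ^ t ≡ 1 - 2 t T + 4 (t + 1).choose 2 T ^ 2` modulo `8`. The coefficient of `q ^ N` in `T`
vanishes unless `N` is a square, and that in `T ^ 2` is even unless `N` is twice a square, because
exchanging the two squares is an involution on the representations of `N`.
-/

open Finset PowerSeries
open scoped PowerSeries.WithPiTopology

section FiniteGaussIdentity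

variable {R : Type*} [CommRing R]

/-- Shanks's finite sum, whose summands are products of `q`-Pochhammer symbols
`(-1; q)_s (q ^ (s + 1); q)_(n - s)`. It deforms the product `(q; q)_n`, its summand at `s = 0`,
into a partial sum of Gauss's theta series. -/
def shanksSum (q : R) (n : ℕ) : R :=
  ∑ s ∈ range (n + 1), (-1) ^ s * (∏ k ∈ range s, (1 + q ^ k)) *
    (∏ k ∈ Ico (s + 1) (n + 1), (1 - q ^ k)) * q ^ (s * (n + 1))

lemma prod_range_one_add_pow (q : R) (n : ℕ) :
    ∏ k ∈ range (n + 1), (1 + q ^ k) = 2 * ∏ k ∈ range n, (1 + q ^ (k + 1)) := by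
  rw [prod_range_succ', pow_zero, one_add_one_eq_two, mul_comm]

lemma shanksSum_succ (q : R) (n : ℕ) :
    shanksSum q (n + 1) = (1 + q ^ (n + 1)) * shanksSum q n +
      (-1) ^ (n + 1) * q ^ (n + 1) ^ 2 * ∏ k ∈ range (n + 2), (1 + q ^ k) := by
  let b (s : ℕ) : R := (-1) ^ s * (∏ k ∈ range s, (1 + q ^ k)) *
    (∏ k ∈ Ico s (n + 1), (1 - q ^ k)) * q ^ (s * (n + 1))
  have telescope : ∀ s ∈ range (n + 1),
      (-1) ^ s * (∏ k ∈ range s, (1 + q ^ k)) *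
          (∏ k ∈ Ico (s + 1) (n + 2), (1 - q ^ k)) * q ^ (s * (n + 2)) =
        (1 + q ^ (n + 1)) * ((-1) ^ s * (∏ k ∈ range s, (1 + q ^ k)) *
          (∏ k ∈ Ico (s + 1) (n + 1), (1 - q ^ k)) * q ^ (s * (n + 1))) + (b (s + 1) - b s) := by
    intro s hs
    have hsn : s < n + 1 := mem_range.mp hs
    simp only [b, prod_range_succ, prod_Ico_succ_top (Nat.succ_le_of_lt hsn),
      prod_eq_prod_Ico_succ_bot hsn]
    ring
  have b_zero : b 0 = 0 := by simp only [b, prod_eq_prod_Ico_succ_bot n.succ_pos]; simp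
  rw [shanksSum, sum_range_succ, sum_congr rfl telescope, sum_add_distrib, ← mul_sum,
    sum_range_sub, b_zero, ← shanksSum, prod_range_succ _ (n + 1)]
  simp only [b, Ico_self, prod_empty]
  ring

lemma shanksSum_eq_prod_mul (q : R) (n : ℕ) :
    shanksSum q n = (∏ k ∈ range n, (1 + q ^ (k + 1))) *
      (1 + 2 * ∑ j ∈ range n, (-1) ^ (j + 1) * q ^ (j + 1) ^ 2) := by
  induction n with
  | zero => simp [shanksSum]
  | succ n ih =>
    rw [shanksSum_succ, ih, prod_range_one_add_pow, prod_range_succ, sum_range_succ]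
    ring

lemma pow_dvd_shanksSum_sub_prod (q : R) (n : ℕ) :
    q ^ (n + 1) ∣ shanksSum q n - ∏ k ∈ range n, (1 - q ^ (k + 1)) := by
  have first_summand :
      ∏ k ∈ Ico 1 (n + 1), (1 - q ^ k) = ∏ k ∈ range n, (1 - q ^ (k + 1)) := by
    simp [prod_Ico_eq_prod_range, add_comm]
  rw [shanksSum, sum_range_succ', ← first_summand]
  simp only [zero_add, pow_zero, range_zero, prod_empty, zero_mul, mul_one, one_mul,
    add_sub_cancel_right]
  exact dvd_sum fun s _ ↦ (pow_dvd_pow q (Nat.le_mul_of_pos_left _ s.succ_pos)).mul_left _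

end FiniteGaussIdentity

section GeneratingFunction

variable (R : Type*)

/-- The generating function of the numbers of overpartitions, with coefficients in `R`. -/
def overpartitionSeries [Semiring R] : R⟦X⟧ :=
  PowerSeries.mk fun n ↦ (overpartitionCount n : R)

/-- The series `∑_{j ≥ 1} (-1) ^ j X ^ (j ^ 2)`, encoded by its coefficients: the sign is `(-1) ^ n`
at `n = j ^ 2` since `j` and `j ^ 2` have the same parity. -/
def alternatingSquareSeries [Ring R] : R⟦X⟧ :=
  PowerSeries.mk fun n ↦ if n ≠ 0 ∧ IsSquare n then (-1) ^ n else 0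

variable {R}

lemma genFun_two_eq_overpartitionSeries [CommSemiring R] :
    Nat.Partition.genFun (fun _ _ ↦ (2 : R)) = overpartitionSeries R := by
  ext n
  simp [overpartitionSeries, overpartitionCount, Finsupp.prod]

variable [CommRing R] [TopologicalSpace R]

lemma hasSum_alternatingSquareSeries :
    HasSum (fun j : ℕ ↦ (-1) ^ (j + 1) * (X : R⟦X⟧) ^ (j + 1) ^ 2) (alternatingSquareSeries R) := by
  rw [WithPiTopology.hasSum_iff_hasSum_coeff]
  intro d
  have coeff_term (j : ℕ) : coeff d ((-1) ^ (j + 1) * (X : R⟦X⟧) ^ (j + 1) ^ 2) =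
      if d = (j + 1) ^ 2 then (-1) ^ d else 0 := by
    have sign : (-1 : R) ^ (j + 1) = (-1) ^ (j + 1) ^ 2 :=
      neg_one_pow_congr (Nat.even_pow' two_ne_zero).symm
    rw [show (-1 : R⟦X⟧) ^ (j + 1) = C ((-1) ^ (j + 1)) by simp, coeff_C_mul_X_pow, sign]
    split_ifs with h
    · rw [h]
    · rfl
  simp only [coeff_term, alternatingSquareSeries, coeff_mk]
  split_ifs with hd
  · obtain ⟨hd0, r, rfl⟩ := hd
    obtain ⟨j, rfl⟩ := Nat.exists_eq_succ_of_ne_zero (left_ne_zero_of_mul hd0)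
    convert hasSum_ite_eq j ((-1 : R) ^ ((j + 1) * (j + 1))) using 3 with i
    rw [← sq, Nat.pow_left_inj two_ne_zero, Nat.succ_inj, eq_comm]
  · convert hasSum_zero with j
    rw [if_neg]
    rintro rfl
    exact hd ⟨by positivity, IsSquare.sq _⟩

variable [IsTopologicalRing R] [T2Space R]

lemma one_add_tsum_two_smul_pow {f : R⟦X⟧} (hf : constantCoeff f = 0) :
    1 + ∑' j : ℕ, (2 : R) • f ^ (j + 1) = (1 + f) * ∑' j : ℕ, f ^ j := by
  have hsum : Summable (f ^ ·) := WithPiTopology.summable_pow_of_constantCoeff_eq_zero hf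
  have geometric : (1 - f) * ∑' j : ℕ, f ^ j = 1 :=
    WithPiTopology.one_sub_mul_tsum_pow_of_constantCoeff_eq_zero hf
  have two_smul_eq (j : ℕ) : (2 : R) • f ^ (j + 1) = 2 * f * f ^ j := by
    rw [ofNat_smul_eq_nsmul, nsmul_eq_mul, pow_succ']
    push_cast
    ring
  simp only [two_smul_eq]
  rw [hsum.tsum_mul_left]
  linear_combination -geometric

lemma hasProd_overpartitionSeries :
    HasProd (fun i : ℕ ↦ (1 + X ^ (i + 1)) * ∑' j : ℕ, ((X : R⟦X⟧) ^ (i + 1)) ^ j)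
      (overpartitionSeries R) := by
  have factor_eq (i : ℕ) : (1 + X ^ (i + 1)) * ∑' j : ℕ, ((X : R⟦X⟧) ^ (i + 1)) ^ j =
      1 + ∑' j : ℕ, (2 : R) • X ^ ((i + 1) * (j + 1)) := by
    simp only [pow_mul X (i + 1)]
    exact (one_add_tsum_two_smul_pow (by simp)).symm
  rw [← genFun_two_eq_overpartitionSeries, funext factor_eq]
  exact Nat.Partition.hasProd_genFun fun _ _ ↦ 2

lemma X_pow_dvd_prod_mul_alternatingSquare_sub_one (n : ℕ) :
    (X : R⟦X⟧) ^ (n + 1) ∣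
      (∏ i ∈ range n, ((1 + X ^ (i + 1)) * ∑' j : ℕ, ((X : R⟦X⟧) ^ (i + 1)) ^ j)) *
        (1 + 2 * ∑ j ∈ range n, (-1) ^ (j + 1) * X ^ (j + 1) ^ 2) - 1 := by
  set Q := ∏ i ∈ range n, ((1 + X ^ (i + 1)) * ∑' j : ℕ, ((X : R⟦X⟧) ^ (i + 1)) ^ j)
  set D : R⟦X⟧ := ∏ i ∈ range n, (1 - X ^ (i + 1))
  have hDQ : D * Q = ∏ i ∈ range n, (1 + X ^ (i + 1)) := by
    rw [← prod_mul_distrib]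
    refine prod_congr rfl fun i _ ↦ ?_
    rw [mul_left_comm, WithPiTopology.one_sub_mul_tsum_pow_of_constantCoeff_eq_zero (by simp),
      mul_one]
  have hD : IsUnit D := IsUnit.prod_iff.mpr fun i _ ↦ by simp [isUnit_iff_constantCoeff]
  rw [← hD.dvd_mul_left, mul_sub, ← mul_assoc, hDQ, mul_one, ← shanksSum_eq_prod_mul]
  exact pow_dvd_shanksSum_sub_prod X n

end GeneratingFunction

theorem overpartitionSeries_mul_one_add_two_mul_alternatingSquareSeries {R : Type*} [CommRing R] :
    overpartitionSeries R * (1 + 2 * alternatingSquareSeries R) = 1 := by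
  let _ : TopologicalSpace R := ⊥
  have _ : DiscreteTopology R := ⟨rfl⟩
  have tendsto_lhs := (hasProd_overpartitionSeries (R := R)).tendsto_prod_nat.mul
    ((hasSum_alternatingSquareSeries (R := R)).tendsto_sum_nat.const_mul 2 |>.const_add 1)
  refine tendsto_nhds_unique tendsto_lhs ?_
  rw [WithPiTopology.tendsto_iff_coeff_tendsto]
  refine fun d ↦ tendsto_atTop_of_eventually_const (i₀ := d) fun n hn ↦ ?_
  rw [← sub_eq_zero, ← map_sub]
  exact X_pow_dvd_iff.mp (X_pow_dvd_prod_mul_alternatingSquare_sub_one n) d (by omega)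

lemma coeff_pow_eq_sum_antidiagonalTuple {R : Type*} [CommSemiring R] (f : R⟦X⟧) (t n : ℕ) :
    coeff n (f ^ t) = ∑ c ∈ Nat.antidiagonalTuple t n, ∏ i, coeff (c i) f := by
  rw [← Fin.prod_const, coeff_prod]
  refine sum_equiv Finsupp.equivFunOnFinite (fun c ↦ ?_) fun c _ ↦ rfl
  simp [mem_finsuppAntidiag, Nat.mem_antidiagonalTuple]

lemma coeff_overpartitionSeries_pow {R : Type*} [CommSemiring R] (t n : ℕ) :
    coeff n (overpartitionSeries R ^ t) = (overpartitionTuples t n : R) := by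
  simp [coeff_pow_eq_sum_antidiagonalTuple, overpartitionTuples, overpartitionSeries]

lemma eight_dvd_pow_sub_of_mul_one_add_two_mul_eq_one {R : Type*} [CommRing R] {x y : R}
    (h : y * (1 + 2 * x) = 1) (t : ℕ) :
    8 ∣ y ^ t - (1 - 2 * (t * x) + 4 * ((t + 1).choose 2 * x ^ 2)) := by
  induction t with
  | zero => simp
  | succ t ih =>
    obtain ⟨z, hz⟩ := ih
    have y_eq : y = 1 - 2 * x + 4 * x ^ 2 - 8 * (y * x ^ 3) := by
      linear_combination (1 - 2 * x + 4 * x ^ 2) * h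
    have choose_succ : ((t + 2).choose 2 : R) = t + 1 + (t + 1).choose 2 := by
      rw [Nat.choose_succ_succ' (t + 1) 1]
      simp
    refine ⟨z * y - (1 - 2 * (t * x) + 4 * ((t + 1).choose 2 * x ^ 2)) * (y * x ^ 3)
      - t * x ^ 3 + (t + 1).choose 2 * (2 * x ^ 4 - x ^ 3), ?_⟩
    rw [pow_succ, choose_succ]
    push_cast
    linear_combination y * hz + (1 - 2 * (t * x) + 4 * ((t + 1).choose 2 * x ^ 2)) * y_eq

lemma two_dvd_coeff_sq {f : ℤ⟦X⟧} {n : ℕ} (hf : ∀ m, n = 2 * m → 2 ∣ coeff m f) :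
    2 ∣ coeff n (f ^ 2) := by
  refine (ZMod.intCast_zmod_eq_zero_iff_dvd _ 2).mp ?_
  rw [sq, coeff_mul]
  push_cast
  refine sum_involution (fun p _ ↦ p.swap) (fun p _ ↦ ?_) (fun p hp hne hfix ↦ hne ?_)
    (fun p hp ↦ by simpa [add_comm] using hp) (fun p _ ↦ p.swap_swap)
  · rw [Prod.fst_swap, Prod.snd_swap, mul_comm (Int.cast (coeff p.2 f)), CharTwo.add_self_eq_zero]
  · have hdiag : p.2 = p.1 := congrArg Prod.fst hfix
    have hn : n = 2 * p.1 := by rw [← mem_antidiagonal.mp hp, hdiag, two_mul]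
    rw [(ZMod.intCast_zmod_eq_zero_iff_dvd _ 2).mpr (hf p.1 hn), zero_mul]

lemma coeff_alternatingSquareSeries_of_not_isSquare {R : Type*} [Ring R] {n : ℕ}
    (hn : ¬ IsSquare n) : coeff n (alternatingSquareSeries R) = 0 := by
  simp [alternatingSquareSeries, hn]

lemma two_dvd_coeff_alternatingSquareSeries_sq {n : ℕ} (hn : ∀ m, n ≠ 2 * m ^ 2) :
    2 ∣ coeff n (alternatingSquareSeries ℤ ^ 2) := by
  refine two_dvd_coeff_sq fun m hnm ↦ ?_
  rw [coeff_alternatingSquareSeries_of_not_isSquare]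
  · exact dvd_zero 2
  · rintro ⟨r, rfl⟩
    exact hn r (by rw [hnm, sq])

theorem overpartitionTuples_sixteen_n_ten_mod_eight_general (t : ℕ) {N : ℕ} (hsq : ¬ IsSquare N)
    (hdouble : ∀ m, N ≠ 2 * m ^ 2) : overpartitionTuples t N ≡ 0 [MOD 8] := by
  set T := alternatingSquareSeries ℤ
  obtain ⟨z, hz⟩ : 8 ∣ overpartitionSeries ℤ ^ t -
      (1 - 2 * (t * T) + 4 * ((t + 1).choose 2 * T ^ 2)) :=
    eight_dvd_pow_sub_of_mul_one_add_two_mul_eq_one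
      overpartitionSeries_mul_one_add_two_mul_alternatingSquareSeries t
  have hpow : overpartitionSeries ℤ ^ t =
      1 - (2 * t) • T + (4 * (t + 1).choose 2) • T ^ 2 + 8 • z := by
    simp only [nsmul_eq_mul]
    push_cast
    linear_combination hz
  have coeff_one_eq : coeff N (1 : ℤ⟦X⟧) = 0 := by
    rw [coeff_one, if_neg (by rintro rfl; exact hsq IsSquare.zero)]
  have coeff_T : coeff N T = 0 := coeff_alternatingSquareSeries_of_not_isSquare hsq
  obtain ⟨w, coeff_T_sq⟩ : 2 ∣ coeff N (T ^ 2) := two_dvd_coeff_alternatingSquareSeries_sq hdouble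
  rw [Nat.modEq_zero_iff_dvd, ← Int.natCast_dvd_natCast]
  refine ⟨(t + 1).choose 2 * w + coeff N z, ?_⟩
  rw [← coeff_overpartitionSeries_pow, hpow]
  simp only [map_add, map_sub, map_nsmul, coeff_one_eq, coeff_T, coeff_T_sq]
  simp only [nsmul_eq_mul]
  push_cast
  ring

lemma natCast_sixteen_mul_add_ten (n : ℕ) : ((16 * n + 10 : ℕ) : ZMod 16) = 10 := by
  push_cast
  rw [show (16 : ZMod 16) = 0 from rfl, zero_mul, zero_add]

lemma not_isSquare_sixteen_mul_add_ten (n : ℕ) : ¬ IsSquare (16 * n + 10) := by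
  rintro ⟨m, hm⟩
  have no_root : ∀ x : ZMod 16, x * x ≠ 10 := by decide
  exact no_root m (by rw [← natCast_sixteen_mul_add_ten n, hm, Nat.cast_mul])

lemma sixteen_mul_add_ten_ne_two_mul_sq (n m : ℕ) : 16 * n + 10 ≠ 2 * m ^ 2 := by
  intro hm
  have no_root : ∀ x : ZMod 16, 2 * x ^ 2 ≠ 10 := by decide
  exact no_root m (by rw [← natCast_sixteen_mul_add_ten n, hm]; push_cast; rfl)

theorem overpartitionTuples_sixteen_n_ten_mod_eight (t n : ℕ) :
    overpartitionTuples t (16 * n + 10) ≡ 0 [MOD 8] :=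
  overpartitionTuples_sixteen_n_ten_mod_eight_general t (not_isSquare_sixteen_mul_add_ten n)
    (sixteen_mul_add_ten_ne_two_mul_sq n)
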